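/- Let λ ∈ Λ_I⁺. (1) For any subsystem Φ' ⊆ Φ: Ψ_λ⁺ ∩ Φ' = Ψ⁺(λ|_{Φ'}, Φ_I ∩ Φ', Φ'). (2) If β ∈ Φ \ Φ_I, then Ψ_λ⁺⁺ ∩ Φ_{β,1} = Ψ⁺⁺(λ|_{Φ_{β,1}}, Φ_I, Φ_{β,1}). (3) If β ∈ Φ \ Φ_λ, then Ψ_λ⁺⁺ ∩ Φ_{β,2} = Ψ⁺⁺(λ|_{Φ_{β,2}}, Φ_I ∩ Φ_{β,2}, Φ_{β,2}). -/

import Mathlib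

open scoped RealInnerProductSpace
open Classical

noncomputable section

namespace JantzenGVM

variable {V : Type*} [NormedAddCommGroup V] [InnerProductSpace ℝ V] [FiniteDimensional ℝ V]

/-- The coroot `α^∨ = 2α/⟨α,α⟩` of a vector `α` (junk value `0` when `α = 0`). -/
def coroot (α : V) : V := (2 / ⟪α, α⟫) • α

/-- The linear functional `v ↦ ⟨v, α^∨⟩`. -/
def corootForm (α : V) : V →ₗ[ℝ] ℝ where
  toFun v := ⟪v, coroot α⟫
  map_add' x y := by simp [inner_add_left]
  map_smul' c x := by simp [inner_smul_left]

lemma corootForm_self {α : V} (h : ⟪α, α⟫ ≠ 0) : corootForm α α = 2 := by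
  simp only [corootForm, coroot, LinearMap.coe_mk, AddHom.coe_mk, real_inner_smul_right]
  field_simp

/-- The reflection `s_α` as a linear automorphism of `V` (the identity when `⟨α,α⟩ = 0`). -/
def reflV (α : V) : V ≃ₗ[ℝ] V :=
  if h : ⟪α, α⟫ = 0 then LinearEquiv.refl ℝ V
  else Module.reflection (corootForm_self h)

/-- `h* = ℂ ⊗ V`, realized as the space of real-linear functionals `V → ℂ` via the
inner product; an element `λ` pairs with a root `α` by `⟨λ, α⟩ = λ α` and with the
coroot by `⟨λ, α^∨⟩ = λ (coroot α)`. -/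
abbrev HStar (V : Type*) [NormedAddCommGroup V] [InnerProductSpace ℝ V] := V →ₗ[ℝ] ℂ

/-- The canonical embedding of `V` into `h*`. -/
def emb (α : V) : HStar V where
  toFun v := (⟪α, v⟫ : ℂ)
  map_add' x y := by simp [inner_add_right]
  map_smul' c x := by simp [inner_smul_right, Complex.real_smul]

/-- The action of a linear automorphism `w` of `V` on `h*`: `(w • λ)(v) = λ(w⁻¹ v)`. -/
def wAct (w : V ≃ₗ[ℝ] V) (l : HStar V) : HStar V := l ∘ₗ (w.symm : V →ₗ[ℝ] V)

/-- The reflection `s_β λ = λ - ⟨λ, β^∨⟩ β` acting on `h*`. -/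
def sRefl (β : V) (l : HStar V) : HStar V := l - l (coroot β) • emb β

/-- The group generated by the reflections in the elements of `Φ'`. -/
def weyl (Φ' : Set V) : Subgroup (V ≃ₗ[ℝ] V) :=
  Subgroup.closure {w | ∃ α ∈ Φ', w = reflV α}

/-- A finite, reduced, crystallographic root system spanning the Euclidean space `V`,
together with a choice of positive system and the corresponding simple system. -/
structure RootSys (V : Type*) [NormedAddCommGroup V] [InnerProductSpace ℝ V]
    [FiniteDimensional ℝ V] where
  Φ : Finset V
  pos : Finset V
  Δ : Finset V
  ne_zero : ∀ α ∈ Φ, α ≠ (0 : V)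
  span_eq_top : Submodule.span ℝ (Φ : Set V) = ⊤
  reduced : ∀ α ∈ Φ, ∀ c : ℝ, c • α ∈ Φ → c = 1 ∨ c = -1
  refl_mem : ∀ α ∈ Φ, ∀ β ∈ Φ, reflV α β ∈ Φ
  crystallographic : ∀ α ∈ Φ, ∀ β ∈ Φ, ∃ n : ℤ, ⟪β, coroot α⟫ = (n : ℝ)
  pos_subset : pos ⊆ Φ
  mem_pos_or : ∀ α ∈ Φ, α ∈ pos ∨ -α ∈ pos
  not_both : ∀ α ∈ pos, -α ∉ pos
  simple_subset : Δ ⊆ pos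
  simple_indep : LinearIndependent ℝ (fun x : {a : V // a ∈ Δ} => x.1)
  simple_gen : ∀ β ∈ pos, ∃ c : V → ℝ, (∀ α ∈ Δ, 0 ≤ c α) ∧ β = ∑ α ∈ Δ, c α • α

/-- A subsystem of the root system: a subset of `Φ` closed under its own reflections. -/
def IsSubsystem (S : RootSys V) (Φ' : Set V) : Prop :=
  Φ' ⊆ (S.Φ : Set V) ∧ ∀ α ∈ Φ', ∀ β ∈ Φ', reflV α β ∈ Φ'

/-- The length of `w`, i.e. the number of positive roots sent to negative roots
(this equals the Coxeter length for elements of the Weyl group). -/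
def len (S : RootSys V) (w : V ≃ₗ[ℝ] V) : ℕ :=
  {β ∈ (S.pos : Set V) | w β ∉ (S.pos : Set V)}.ncard

/-- `Φ_I = ℤI ∩ Φ`, the subsystem generated by a subset `I` of the simple roots. -/
def PhiI (S : RootSys V) (I : Finset V) : Set V :=
  {α ∈ (S.Φ : Set V) | α ∈ Submodule.span ℤ (I : Set V)}

/-- `z` is a positive integer. -/
def IsPosInt (z : ℂ) : Prop := ∃ n : ℤ, 0 < n ∧ z = (n : ℂ)

/-- `z` is an integer. -/
def IsInt (z : ℂ) : Prop := ∃ n : ℤ, z = (n : ℂ)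

/-- `Λ_I⁺ = {λ ∈ h* : ⟨λ, α^∨⟩ ∈ ℤ_{>0} for all α ∈ I}`. -/
def LambdaP (I : Set V) : Set (HStar V) :=
  {l | ∀ α ∈ I, IsPosInt (l (coroot α))}

/-- `Λ⁺(Φ'', Φ') = {ν ∈ ℂΦ' : ⟨ν, α^∨⟩ ∈ ℤ_{>0} for all α ∈ Φ'' ∩ Φ⁺}`. -/
def LambdaPSub (S : RootSys V) (Φ'' Φ' : Set V) : Set (HStar V) :=
  {l | l ∈ Submodule.span ℂ (emb '' Φ') ∧
       ∀ α ∈ Φ'' ∩ (S.pos : Set V), IsPosInt (l (coroot α))}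

/-- `λ` is `Φ''`-regular: `⟨λ, α⟩ ≠ 0` for all `α ∈ Φ''`. -/
def IsRegularOn (Φ'' : Set V) (l : HStar V) : Prop := ∀ α ∈ Φ'', l α ≠ 0

/-- `Ψ⁺(λ, Φ'', Φ') = {β ∈ (Φ' ∩ Φ⁺) \ Φ'' : ⟨λ, β^∨⟩ ∈ ℤ_{>0}}`. -/
def PsiP (S : RootSys V) (Φ'' Φ' : Set V) (l : HStar V) : Set V :=
  {β | β ∈ Φ' ∩ (S.pos : Set V) ∧ β ∉ Φ'' ∧ IsPosInt (l (coroot β))}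

/-- `Ψ⁺⁺(λ, Φ'', Φ') = {β ∈ Ψ⁺(λ, Φ'', Φ') : s_β λ is Φ''-regular}`. -/
def PsiPP (S : RootSys V) (Φ'' Φ' : Set V) (l : HStar V) : Set V :=
  {β ∈ PsiP S Φ'' Φ' l | ∀ α ∈ Φ'', (sRefl β l) α ≠ 0}

/-- The sign function: `sgn(λ, μ) = (-1)^{ℓ(w)}` if `λ, μ` are `Φ''`-regular and
`μ = wλ` for some `w ∈ W(Φ'')`, and `0` otherwise. -/
def sgnW (S : RootSys V) (Φ'' : Set V) (l m : HStar V) : ℤ :=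
  if h : IsRegularOn Φ'' l ∧ IsRegularOn Φ'' m ∧ ∃ w, w ∈ weyl Φ'' ∧ m = wAct w l
  then (-1) ^ len S h.2.2.choose else 0

/-- The Jantzen coefficient `c(λ, μ, Φ'', Φ') = Σ_{β ∈ Ψ⁺⁺(λ,Φ'',Φ')} sgn(s_β λ, μ)`. -/
def jc (S : RootSys V) (Φ'' Φ' : Set V) (l m : HStar V) : ℤ :=
  ∑ᶠ β ∈ PsiPP S Φ'' Φ' l, sgnW S Φ'' (sRefl β l) m

/-- The symmetrized Jantzen coefficient `c̃(λ, μ, Φ'', Φ')`. -/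
def jcSym (S : RootSys V) (Φ'' Φ' : Set V) (l m : HStar V) : ℤ :=
  jc S Φ'' Φ' l m + jc S Φ'' Φ' m l

/-- `θ(λ) = Σ_{w ∈ W_I} (-1)^{ℓ(w)} e^{wλ}` in the free `ℤ`-module on `h*`. -/
def theta (S : RootSys V) (I : Finset V) (l : HStar V) : HStar V →₀ ℤ :=
  ∑ᶠ w ∈ (weyl (PhiI S I) : Set (V ≃ₗ[ℝ] V)),
    Finsupp.single (wAct w l) ((-1) ^ len S w)

/-- `Φ_λ = {α ∈ Φ : ⟨λ, α⟩ = 0}`. -/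
def singSet (S : RootSys V) (l : HStar V) : Set V :=
  {α ∈ (S.Φ : Set V) | l α = 0}

/-- `Φ_{[λ]} = {α ∈ Φ : ⟨λ, α^∨⟩ ∈ ℤ}`. -/
def integralSet (S : RootSys V) (l : HStar V) : Set V :=
  {α ∈ (S.Φ : Set V) | IsInt (l (coroot α))}

/-- `(ℚ A) ∩ Φ`, the intersection of the rational span of `A` with `Φ`.
Taking `A = Φ_I ∪ {β}` gives `Φ_{β,1}`; taking `A = Φ_λ ∪ {β}` gives `Φ_{β,2}`. -/
def ratSpanRoots (S : RootSys V) (A : Set V) : Set V :=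
  {γ ∈ (S.Φ : Set V) | ∃ (t : Finset V) (c : V → ℚ),
    (t : Set V) ⊆ A ∧ γ = ∑ α ∈ t, (c α : ℝ) • α}

/-- `Φ_{β,0}`, the irreducible component of `Φ` containing `β`. -/
def component (S : RootSys V) (β : V) : Set V :=
  {γ ∈ (S.Φ : Set V) |
    Relation.ReflTransGen
      (fun x y => x ∈ (S.Φ : Set V) ∧ y ∈ (S.Φ : Set V) ∧ ⟪x, y⟫ ≠ 0) β γ}

/-- `λ|_{Φ'}`: the unique element of `ℂΦ'` with `⟨λ|_{Φ'}, α^∨⟩ = ⟨λ, α^∨⟩`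
for all `α ∈ Φ'`. -/
def restrictW (Φ' : Set V) (l : HStar V) : HStar V :=
  letI : Nonempty (HStar V) := ⟨0⟩
  Classical.epsilon fun m =>
    m ∈ Submodule.span ℂ (emb '' Φ') ∧ ∀ α ∈ Φ', m (coroot α) = l (coroot α)

/-- `ᴵWᴶ = {w ∈ W : ℓ(uwv) = ℓ(u) + ℓ(w) + ℓ(v) for all u ∈ W_I, v ∈ W_J}`. -/
def doubleCoset (S : RootSys V) (I J : Finset V) : Set (V ≃ₗ[ℝ] V) :=
  {w | w ∈ weyl (S.Φ : Set V) ∧ ∀ u ∈ weyl (PhiI S I), ∀ v ∈ weyl (PhiI S J),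
    len S (u * w * v) = len S u + len S w + len S v}

/-- The fundamental weight `ϖ_j` relative to an enumeration `e` of the simple roots:
the unique element of `h*` with `⟨ϖ_j, α_k^∨⟩ = δ_{jk}`. -/
def fundWeight {n : ℕ} (e : Fin n → V) (j : Fin n) : HStar V :=
  letI : Nonempty (HStar V) := ⟨0⟩
  Classical.epsilon fun m => ∀ k : Fin n, m (coroot (e k)) = if k = j then 1 else 0

/-- The labels of the irreducible Dynkin types. -/
inductive LieType | A | B | C | D | E | F | G
deriving DecidableEq

/-- The Cartan matrix of type `A_n` (1-based indices): entry `(i,j)` is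
`⟨α_i, α_j^∨⟩`. -/
def cartanA (i j : ℕ) : ℤ :=
  if i = j then 2 else if i + 1 = j ∨ j + 1 = i then -1 else 0

/-- The Cartan matrices of the irreducible types in the standard (Bourbaki/Humphreys)
numbering of the Dynkin diagram: `cartanEntry t n i j = ⟨α_i, α_j^∨⟩` (1-based). -/
def cartanEntry : LieType → ℕ → ℕ → ℕ → ℤ
  | .A, _, i, j => cartanA i j
  | .B, n, i, j => if i + 1 = n ∧ j = n then -2 else cartanA i j
  | .C, n, i, j => if i = n ∧ j + 1 = n then -2 else cartanA i j
  | .D, n, i, j =>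
      if i = j then 2
      else if (i + 2 = n ∧ j = n) ∨ (i = n ∧ j + 2 = n) then -1
      else if (i + 1 = n ∧ j = n) ∨ (i = n ∧ j + 1 = n) then 0
      else cartanA i j
  | .E, _, i, j =>
      if i = j then 2
      else if (i = 1 ∧ j = 3) ∨ (i = 3 ∧ j = 1) ∨ (i = 2 ∧ j = 4) ∨ (i = 4 ∧ j = 2) then -1
      else if (i = 1 ∧ j = 2) ∨ (i = 2 ∧ j = 1) ∨ (i = 2 ∧ j = 3) ∨ (i = 3 ∧ j = 2) then 0
      else cartanA i j
  | .F, _, i, j => if i = 2 ∧ j = 3 then -2 else cartanA i j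
  | .G, _, i, j => if i = 2 ∧ j = 1 then -3 else cartanA i j

/-- The standard basis vector `e_k` (1-based index, junk `0` outside `1 ≤ k ≤ n`). -/
def stdE (n k : ℕ) : EuclideanSpace ℝ (Fin n) :=
  if h : 1 ≤ k ∧ k ≤ n then EuclideanSpace.single ⟨k - 1, by omega⟩ 1 else 0

/-- The labels `B`, `C`, `D` of the classical non-`A` types. -/
inductive BCD | B | C | D
deriving DecidableEq

/-- The root set of `B_n` / `C_n` / `D_n` in the standard realization. -/
def bcdRoots (t : BCD) (n : ℕ) : Set (EuclideanSpace ℝ (Fin n)) :=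
  {v | (∃ i j : ℕ, 1 ≤ i ∧ i < j ∧ j ≤ n ∧
          (v = stdE n i - stdE n j ∨ v = -(stdE n i - stdE n j) ∨
           v = stdE n i + stdE n j ∨ v = -(stdE n i + stdE n j))) ∨
       (match t with
        | .B => ∃ i : ℕ, 1 ≤ i ∧ i ≤ n ∧ (v = stdE n i ∨ v = -stdE n i)
        | .C => ∃ i : ℕ, 1 ≤ i ∧ i ≤ n ∧ (v = (2:ℝ) • stdE n i ∨ v = -((2:ℝ) • stdE n i))
        | .D => False)}

/-- The positive roots of `B_n` / `C_n` / `D_n` in the standard realization. -/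
def bcdPos (t : BCD) (n : ℕ) : Set (EuclideanSpace ℝ (Fin n)) :=
  {v | (∃ i j : ℕ, 1 ≤ i ∧ i < j ∧ j ≤ n ∧
          (v = stdE n i - stdE n j ∨ v = stdE n i + stdE n j)) ∨
       (match t with
        | .B => ∃ i : ℕ, 1 ≤ i ∧ i ≤ n ∧ v = stdE n i
        | .C => ∃ i : ℕ, 1 ≤ i ∧ i ≤ n ∧ v = (2:ℝ) • stdE n i
        | .D => False)}

/-- The simple roots of `B_n` / `C_n` / `D_n` in the standard realization. -/
def bcdSimple (t : BCD) (n : ℕ) : Set (EuclideanSpace ℝ (Fin n)) :=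
  {v | (∃ i : ℕ, 1 ≤ i ∧ i < n ∧ v = stdE n i - stdE n (i + 1)) ∨
       (match t with
        | .B => v = stdE n n
        | .C => v = (2:ℝ) • stdE n n
        | .D => v = stdE n (n - 1) + stdE n n)}

/-- The simple root `α_k` of `B_n` / `C_n` / `D_n` (1-based index `k`). -/
def bcdAlpha (t : BCD) (n k : ℕ) : EuclideanSpace ℝ (Fin n) :=
  if k < n then stdE n k - stdE n (k + 1)
  else match t with
  | .B => stdE n n
  | .C => (2:ℝ) • stdE n n
  | .D => stdE n (n - 1) + stdE n n


lemma emb_mem_span (Φ' : Set V) {v : V} (hv : v ∈ Submodule.span ℝ Φ') :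
    emb v ∈ Submodule.span ℂ (emb '' Φ') := by
  induction hv using Submodule.span_induction with
  | mem x hx => exact Submodule.subset_span ⟨x, hx, rfl⟩
  | zero =>
    have : emb (0 : V) = 0 := by ext v; simp [emb]
    rw [this]; exact Submodule.zero_mem _
  | add x y _ _ hx hy =>
    have : emb (x + y) = emb x + emb y := by ext v; simp [emb, inner_add_left]
    rw [this]; exact Submodule.add_mem _ hx hy
  | smul a x _ hx =>
    have : emb (a • x) = (a : ℂ) • emb x := by ext v; simp [emb, real_inner_smul_left]
    rw [this]; exact Submodule.smul_mem _ _ hx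

lemma exists_restrict (Φ' : Set V) (l : HStar V) :
    ∃ m : HStar V, m ∈ Submodule.span ℂ (emb '' Φ') ∧
      ∀ α ∈ Φ', m (coroot α) = l (coroot α) := by
  let b := stdOrthonormalBasis ℝ (Submodule.span ℝ Φ')
  refine ⟨∑ i, l (b i : V) • emb (b i : V), ?_, ?_⟩
  · exact Submodule.sum_mem _ fun i _ =>
      Submodule.smul_mem _ _ (emb_mem_span Φ' (b i).2)
  · intro α hα
    have hx : coroot α ∈ Submodule.span ℝ Φ' :=
      Submodule.smul_mem _ _ (Submodule.subset_span hα)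
    generalize coroot α = x at hx
    have h := congrArg (fun y : Submodule.span ℝ Φ' => l (y : V)) (b.sum_repr' ⟨x, hx⟩)
    simp only [Submodule.coe_sum, Submodule.coe_smul, map_sum, map_smul,
      Submodule.coe_inner] at h
    rw [← h, LinearMap.sum_apply]
    refine Finset.sum_congr rfl fun i _ => ?_
    simp [emb, mul_comm]

lemma restrictW_coroot (Φ' : Set V) (l : HStar V) {α : V} (hα : α ∈ Φ') :
    restrictW Φ' l (coroot α) = l (coroot α) :=
  (Classical.epsilon_spec (exists_restrict Φ' l)).2 α hα

lemma eq_smul_coroot (α : V) : α = (⟪α, α⟫ / 2) • coroot α := by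
  by_cases h : α = 0
  · simp [h, coroot]
  · have : ⟪α, α⟫ ≠ 0 := inner_self_ne_zero.mpr h
    rw [coroot, smul_smul, div_mul_div_cancel₀ two_ne_zero, div_self this, one_smul]

lemma restrictW_apply (Φ' : Set V) (l : HStar V) {α : V} (hα : α ∈ Φ') :
    restrictW Φ' l α = l α := by
  rw [eq_smul_coroot α, map_smul, map_smul, restrictW_coroot Φ' l hα]

lemma sRefl_restrictW (Φ' : Set V) (l : HStar V) {α β : V} (hα : α ∈ Φ') (hβ : β ∈ Φ') :
    sRefl β (restrictW Φ' l) α = sRefl β l α := by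
  simp [sRefl, restrictW_apply Φ' l hα, restrictW_coroot Φ' l hβ]

lemma PsiP_restrict (S : RootSys V) (Φ'' Φ' : Set V) (hΦ' : Φ' ⊆ (S.Φ : Set V)) (l : HStar V) :
    PsiP S Φ'' (S.Φ : Set V) l ∩ Φ' = PsiP S (Φ'' ∩ Φ') Φ' (restrictW Φ' l) := by
  ext γ
  constructor
  · rintro ⟨⟨⟨_, h2⟩, h3, h4⟩, h5⟩
    exact ⟨⟨h5, h2⟩, fun h => h3 h.1, by rwa [restrictW_coroot Φ' l h5]⟩
  · rintro ⟨⟨h5, h2⟩, h3, h4⟩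
    exact ⟨⟨⟨hΦ' h5, h2⟩, fun h => h3 ⟨h, h5⟩, by rwa [restrictW_coroot Φ' l h5] at h4⟩, h5⟩

lemma PsiPP_restrict (S : RootSys V) (Φ'' Φ' : Set V) (hΦ' : Φ' ⊆ (S.Φ : Set V)) (l : HStar V)
    (H : ∀ γ ∈ Φ', ∀ α ∈ Φ'', sRefl γ l α = 0 → α ∈ Φ') :
    PsiPP S Φ'' (S.Φ : Set V) l ∩ Φ' = PsiPP S (Φ'' ∩ Φ') Φ' (restrictW Φ' l) := by
  have h1 := PsiP_restrict S Φ'' Φ' hΦ' l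
  ext γ
  constructor
  · rintro ⟨⟨h2, h3⟩, h4⟩
    refine ⟨h1 ▸ ⟨h2, h4⟩, fun α hα => ?_⟩
    rw [sRefl_restrictW Φ' l hα.2 h4]
    exact h3 α hα.1
  · rintro ⟨h2, h3⟩
    have h5 := h2
    rw [← h1] at h5
    refine ⟨⟨h5.1, fun α hα h0 => ?_⟩, h5.2⟩
    have hα' := H γ h5.2 α hα h0
    refine h3 α ⟨hα, hα'⟩ ?_
    rwa [sRefl_restrictW Φ' l hα' h5.2]

lemma mem_ratSpanRoots (S : RootSys V) {A : Set V} {α : V} (hS : α ∈ (S.Φ : Set V))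
    (hA : α ∈ A) : α ∈ ratSpanRoots S A :=
  ⟨hS, {α}, fun _ => 1, by simpa using hA, by simp⟩

lemma reflV_apply {γ : V} (h : γ ≠ 0) (v : V) : reflV γ v = v - ⟪v, coroot γ⟫ • γ := by
  have h' : ⟪γ, γ⟫ ≠ 0 := inner_self_ne_zero.mpr h
  rw [reflV, dif_neg h', Module.reflection_apply]
  rfl

lemma sRefl_eq (γ : V) (l : HStar V) (v : V) :
    sRefl γ l v = l (v - ⟪v, coroot γ⟫ • γ) := by
  simp only [sRefl, emb, coroot, LinearMap.sub_apply, LinearMap.smul_apply, LinearMap.coe_mk,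
    AddHom.coe_mk, map_sub, map_smul, real_inner_smul_right, smul_eq_mul, Complex.real_smul,
    real_inner_comm v γ]
  push_cast
  ring

lemma mem_of_add (S : RootSys V) {A : Set V} {α δ γ : V} (hα : α ∈ (S.Φ : Set V))
    (hδ : δ ∈ A) (hγ : γ ∈ ratSpanRoots S A) (n : ℤ) (h : α = δ + (n : ℝ) • γ) :
    α ∈ ratSpanRoots S A := by
  obtain ⟨_, t, c, ht, hc⟩ := hγ
  refine ⟨hα, insert δ t,
    fun a => (if a = δ then 1 else 0) + n * (if a ∈ t then c a else 0), ?_, ?_⟩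
  · rw [Finset.coe_insert]
    exact Set.insert_subset hδ ht
  · have e1 : ∑ a ∈ insert δ t, (if a = δ then (1 : ℝ) else 0) • a = δ := by
      simp [ite_smul]
    have e2 : ∑ a ∈ insert δ t, ((n : ℝ) * (if a ∈ t then (c a : ℝ) else 0)) • a
        = (n : ℝ) • γ := by
      rw [hc, Finset.smul_sum]
      symm
      refine Finset.sum_subset_zero_on_sdiff (Finset.subset_insert _ _) ?_ ?_
      · intro x hx
        simp [(Finset.mem_sdiff.mp hx).2]
      · intro x hx
        simp [hx, smul_smul]
    rw [h]
    nth_rewrite 1 [← e1]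
    rw [← e2, ← Finset.sum_add_distrib]
    refine Finset.sum_congr rfl fun a _ => ?_
    rw [← add_smul]
    push_cast
    split_ifs <;> simp

/-- Lemma 3.11: for `λ ∈ Λ_I⁺`:
(1) for any subsystem `Φ' ⊆ Φ`, `Ψ_λ⁺ ∩ Φ' = Ψ⁺(λ|_{Φ'}, Φ_I ∩ Φ', Φ')`;
(2) if `β ∈ Φ \ Φ_I`, `Ψ_λ⁺⁺ ∩ Φ_{β,1} = Ψ⁺⁺(λ|_{Φ_{β,1}}, Φ_I, Φ_{β,1})`;
(3) if `β ∈ Φ \ Φ_λ`, `Ψ_λ⁺⁺ ∩ Φ_{β,2} = Ψ⁺⁺(λ|_{Φ_{β,2}}, Φ_I ∩ Φ_{β,2}, Φ_{β,2})`. -/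
theorem statement_3 {V : Type*} [NormedAddCommGroup V] [InnerProductSpace ℝ V]
    [FiniteDimensional ℝ V]
    (S : RootSys V) (I : Finset V) (hI : I ⊆ S.Δ)
    (lam : HStar V) (hlam : lam ∈ LambdaP (I : Set V)) :
    (∀ Φ' : Set V, IsSubsystem S Φ' →
      PsiP S (PhiI S I) (S.Φ : Set V) lam ∩ Φ' =
        PsiP S (PhiI S I ∩ Φ') Φ' (restrictW Φ' lam)) ∧
    (∀ β ∈ (S.Φ : Set V), β ∉ PhiI S I →
      PsiPP S (PhiI S I) (S.Φ : Set V) lam ∩ ratSpanRoots S (PhiI S I ∪ {β}) =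
        PsiPP S (PhiI S I) (ratSpanRoots S (PhiI S I ∪ {β}))
          (restrictW (ratSpanRoots S (PhiI S I ∪ {β})) lam)) ∧
    (∀ β ∈ (S.Φ : Set V), β ∉ singSet S lam →
      PsiPP S (PhiI S I) (S.Φ : Set V) lam ∩ ratSpanRoots S (singSet S lam ∪ {β}) =
        PsiPP S (PhiI S I ∩ ratSpanRoots S (singSet S lam ∪ {β}))
          (ratSpanRoots S (singSet S lam ∪ {β}))
          (restrictW (ratSpanRoots S (singSet S lam ∪ {β})) lam)) := by
  refine ⟨fun Φ' hΦ' => PsiP_restrict S _ Φ' hΦ'.1 lam, fun β _ _ => ?_, fun β _ _ => ?_⟩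
  · have hsub : PhiI S I ⊆ ratSpanRoots S (PhiI S I ∪ {β}) := fun α hα =>
      mem_ratSpanRoots S hα.1 (Or.inl hα)
    have h := PsiPP_restrict S (PhiI S I) (ratSpanRoots S (PhiI S I ∪ {β}))
      (fun _ h => h.1) lam (fun _ _ α hα _ => hsub hα)
    rwa [Set.inter_eq_left.mpr hsub] at h
  · refine PsiPP_restrict S (PhiI S I) _ (fun _ h => h.1) lam ?_
    intro γ hγ α hα h0
    obtain ⟨n, hn⟩ := S.crystallographic γ hγ.1 α hα.1
    have hr := S.refl_mem γ hγ.1 α hα.1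
    rw [reflV_apply (S.ne_zero γ hγ.1)] at hr
    rw [sRefl_eq] at h0
    refine mem_of_add S hα.1 (δ := α - ⟪α, coroot γ⟫ • γ) (Or.inl ⟨hr, h0⟩) hγ n ?_
    rw [hn, sub_add_cancel]

end JantzenGVM
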